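/- Let d, N ∈ ℕ, p ≥ 2 and c₀ > 0. There exists c > 0, depending only on d, N, p, c₀, with the following property. Let Q ⊂ ℝ^d be a cube with sidelength R, let θ : ℝ^d → ℝ be continuously differentiable with support contained in 2Q, 0 ≤ θ ≤ 1, θ ≡ 1 on Q and |∇θ| ≤ c₀/R everywhere, and let u be twice continuously differentiable on a neighborhood of the closure of 2Q with values in ℝ^N. Set B := sup_{x ∈ 2Q} |u(x) − ⟨u⟩_{2Q}|. Then ⨍_{2Q} θ^{p+2}|∇u|^{p+2} ≤ c[(B/R)^{p+2} + B² ⨍_{2Q} θ^{p+2}|∇u|^{p−2}|∇²u|²]. -/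

import Mathlib

open MeasureTheory Metric

noncomputable section

/-- The open axis-parallel cube with center `c` and sidelength `R`. -/
def cube {d : ℕ} (c : EuclideanSpace ℝ (Fin d)) (R : ℝ) : Set (EuclideanSpace ℝ (Fin d)) :=
  {x | ∀ i, |x i - c i| < R / 2}

/-- Frobenius norm of the first derivative array of `u` at `x`. -/
def gradFrob {d N : ℕ} (u : EuclideanSpace ℝ (Fin d) → EuclideanSpace ℝ (Fin N))
    (x : EuclideanSpace ℝ (Fin d)) : ℝ :=
  Real.sqrt (∑ α : Fin N, ∑ i : Fin d, (fderiv ℝ u x (EuclideanSpace.single i 1) α) ^ 2)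

/-- Frobenius norm of the second derivative array of `u` at `x`. -/
def hessFrob {d N : ℕ} (u : EuclideanSpace ℝ (Fin d) → EuclideanSpace ℝ (Fin N))
    (x : EuclideanSpace ℝ (Fin d)) : ℝ :=
  Real.sqrt (∑ α : Fin N, ∑ i : Fin d, ∑ j : Fin d,
    (iteratedFDeriv ℝ 2 u x
      ![EuclideanSpace.single i 1, EuclideanSpace.single j 1] α) ^ 2)

lemma young1 (K B R a s : ℝ) (hs : 4 ≤ s) (hK : 0 ≤ K) (hB : 0 ≤ B) (hR : 0 < R) (ha : 0 ≤ a) :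
    K * (B / R) * a ^ (s - 1) ≤ 1/4 * a ^ s + (4 * K) ^ s * (B / R) ^ s := by
  set b := K * (B / R) with hb
  have hb0 : 0 ≤ b := by positivity
  have h1 : (4 * K) ^ s * (B / R) ^ s = (4 * b) ^ s := by
    rw [← Real.mul_rpow (by positivity) (by positivity)]; congr 1; rw [hb]; ring
  have hsp : ∀ y : ℝ, 0 ≤ y → y ^ s = y ^ (s - 1) * y := by
    intro y hy
    have := Real.rpow_add_of_nonneg hy (y := s - 1) (z := 1) (by linarith) (by norm_num)
    rw [Real.rpow_one] at this
    rw [← this]; congr 1; ring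
  rw [h1]
  have p1 : 0 ≤ a ^ (s - 1) := by positivity
  have p2 : 0 ≤ (4 * b) ^ (s - 1) := by positivity
  rw [hsp a ha, hsp (4 * b) (by positivity)]
  rcases le_total (4 * b) a with h | h
  · nlinarith [mul_nonneg p1 (sub_nonneg.2 h), mul_nonneg p2 hb0]
  · have h2 : a ^ (s - 1) ≤ (4 * b) ^ (s - 1) := Real.rpow_le_rpow ha h (by linarith)
    nlinarith [mul_nonneg p1 ha, mul_le_mul_of_nonneg_left h2 hb0, mul_nonneg p2 hb0]

lemma pointwise {d N : ℕ} (p c₀ R B t g h : ℝ) (hp : 2 ≤ p) (hc₀ : 0 < c₀) (hR : 0 < R)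
    (hB : 0 ≤ B) (ht : 0 ≤ t) (hg : 0 ≤ g) (hh : 0 ≤ h)
    (T : Fin d → ℝ) (hT : ∀ i, |T i| ≤ c₀ / R)
    (v : Fin N → ℝ) (hv : ∀ α, |v α| ≤ B)
    (a : Fin N → Fin d → ℝ) (H : Fin N → Fin d → Fin d → ℝ)
    (hga : g ^ 2 = ∑ α, ∑ i, a α i ^ 2)
    (ha : ∀ α i, |a α i| ≤ g) (hH : ∀ α i j, |H α i j| ≤ h) :
    t ^ (p + 2) * g ^ (p + 2) ≤
      2 * (∑ i, (t ^ (p + 2) * (g ^ p * (∑ α, (a α i * a α i + v α * H α i i))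
          + (p / 2 * g ^ (p - 2) * ∑ α, ∑ j, 2 * (a α j * H α i j)) * ∑ α, v α * a α i)
          + ((p + 2) * t ^ (p + 1) * T i) * (g ^ p * ∑ α, v α * a α i)))
      + (2 * (4 * (d * (p + 2) * c₀ * N)) ^ (p + 2) * (B / R) ^ (p + 2)
        + 2 * (d * (p * N * d * N + N)) ^ 2 * (B ^ 2 * (t ^ (p + 2) * g ^ (p - 2) * h ^ 2))) := by
  set q := g ^ (p - 2) with hq
  set τ := t ^ (p + 2) with hτ
  have hq0 : 0 ≤ q := by positivity
  have hτ0 : 0 ≤ τ := by positivity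
  have hgp : g ^ p = q * g ^ 2 := by
    have := Real.rpow_add_of_nonneg hg (y := p - 2) (z := 2) (by linarith) (by norm_num)
    rw [Real.rpow_two] at this
    rw [← this]; congr 1; ring
  have hgp2 : g ^ (p + 2) = q * g ^ 4 := by
    have := Real.rpow_add_of_nonneg hg (y := p) (z := 2) (by linarith) (by norm_num)
    rw [Real.rpow_two] at this
    rw [this, hgp]; ring
  have hgp1 : g ^ (p + 1) = q * g ^ 3 := by
    have := Real.rpow_add_of_nonneg hg (y := p) (z := 1) (by linarith) (by norm_num)
    rw [Real.rpow_one] at this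
    rw [this, hgp]; ring
  have hS : ∀ i, |∑ α, v α * a α i| ≤ N * (B * g) := by
    intro i
    refine (Finset.abs_sum_le_sum_abs _ _).trans ?_
    refine (Finset.sum_le_card_nsmul _ _ (B * g) ?_).trans (by simp)
    intro α _
    rw [abs_mul]; exact mul_le_mul (hv α) (ha α i) (abs_nonneg _) hB
  have hV : ∀ i, |∑ α, v α * H α i i| ≤ N * (B * h) := by
    intro i
    refine (Finset.abs_sum_le_sum_abs _ _).trans ?_
    refine (Finset.sum_le_card_nsmul _ _ (B * h) ?_).trans (by simp)
    intro α _
    rw [abs_mul]; exact mul_le_mul (hv α) (hH α i i) (abs_nonneg _) hB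
  have hG : ∀ i, |∑ α, ∑ j, 2 * (a α j * H α i j)| ≤ N * (d * (2 * (g * h))) := by
    intro i
    refine (Finset.abs_sum_le_sum_abs _ _).trans ?_
    refine (Finset.sum_le_card_nsmul _ _ (d * (2 * (g * h))) ?_).trans (by simp)
    intro α _
    refine (Finset.abs_sum_le_sum_abs _ _).trans ?_
    refine (Finset.sum_le_card_nsmul _ _ (2 * (g * h)) ?_).trans (by simp)
    intro j _
    rw [abs_mul, abs_mul, abs_two]
    have := mul_le_mul (ha α j) (hH α i j) (abs_nonneg _) hg
    linarith
  set S : Fin d → ℝ := fun i => ∑ α, v α * a α i with hSd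
  set V : Fin d → ℝ := fun i => ∑ α, v α * H α i i with hVd
  set G' : Fin d → ℝ := fun i => ∑ α, ∑ j, 2 * (a α j * H α i j) with hGd
  set A : Fin d → ℝ := fun i => ∑ α, a α i * a α i with hAd
  have hA : ∑ i, A i = g ^ 2 := by
    rw [hga, Finset.sum_comm]; simp only [sq]
  have hterm : ∀ i, (τ * (g ^ p * (∑ α, (a α i * a α i + v α * H α i i))
          + (p / 2 * q * ∑ α, ∑ j, 2 * (a α j * H α i j)) * ∑ α, v α * a α i)
          + ((p + 2) * t ^ (p + 1) * T i) * (g ^ p * ∑ α, v α * a α i)) ≥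
        τ * (q * g ^ 2) * A i - ((p + 2) * c₀ * N * ((B / R) * (t ^ (p + 1) * g ^ (p + 1)))
          + (p * N * d * N + N) * (B * τ * q * g ^ 2 * h)) := by
    intro i
    rw [Finset.sum_add_distrib, hgp, hgp1]
    change τ * (q * g ^ 2 * (A i + V i) + (p / 2 * q * G' i) * S i) + ((p + 2) * t ^ (p + 1) * T i) * (q * g ^ 2 * S i) ≥ _
    have e1 : |τ * q * g ^ 2 * V i| ≤ τ * q * g ^ 2 * (N * (B * h)) := by
      rw [abs_mul, abs_of_nonneg (by positivity : 0 ≤ τ * q * g ^ 2)]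
      exact mul_le_mul_of_nonneg_left (hV i) (by positivity)
    have e2 : |τ * (p / 2) * q * (G' i * S i)| ≤ τ * (p / 2) * q * ((N * (d * (2 * (g * h)))) * (N * (B * g))) := by
      rw [abs_mul, abs_of_nonneg (by positivity : 0 ≤ τ * (p / 2) * q), abs_mul]
      exact mul_le_mul_of_nonneg_left (mul_le_mul (hG i) (hS i) (abs_nonneg _) (by positivity)) (by positivity)
    have e3 : |(p + 2) * t ^ (p + 1) * q * g ^ 2 * (T i * S i)| ≤ (p + 2) * t ^ (p + 1) * q * g ^ 2 * ((c₀ / R) * (N * (B * g))) := by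
      rw [abs_mul, abs_of_nonneg (by positivity : 0 ≤ (p + 2) * t ^ (p + 1) * q * g ^ 2), abs_mul]
      exact mul_le_mul_of_nonneg_left (mul_le_mul (hT i) (hS i) (abs_nonneg _) (by positivity)) (by positivity)
    have f1 := neg_le_of_abs_le e1
    have f2 := neg_le_of_abs_le e2
    have f3 := neg_le_of_abs_le e3
    have i3 : (p + 2) * t ^ (p + 1) * q * g ^ 2 * ((c₀ / R) * (N * (B * g))) = (p + 2) * c₀ * N * ((B / R) * (t ^ (p + 1) * (q * g ^ 3))) := by ring
    rw [i3] at f3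
    linarith
  have hsum := Finset.sum_le_sum (fun i (_ : i ∈ Finset.univ) => hterm i)
  rw [Finset.sum_sub_distrib, ← Finset.mul_sum, hA, Finset.sum_const, Finset.card_univ, Fintype.card_fin, nsmul_eq_mul] at hsum
  have hy := young1 (d * (p + 2) * c₀ * N) B R (t * g) (p + 2) (by linarith) (by positivity) hB hR (by positivity)
  rw [Real.mul_rpow ht hg, Real.mul_rpow ht hg, show p + 2 - 1 = p + 1 by ring, hgp2] at hy
  rw [hgp2]
  set K := (d * (p * N * d * N + N) : ℝ) with hK
  have hy2 : K * (B * τ * q * g ^ 2 * h) ≤ 1 / 4 * (τ * (q * g ^ 4)) + K ^ 2 * (B ^ 2 * (τ * q * h ^ 2)) := by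
    have := mul_nonneg (mul_nonneg hτ0 hq0) (sq_nonneg (g ^ 2 / 2 - K * B * h))
    linarith
  have : (d:ℝ) * ((p + 2) * c₀ * N * ((B / R) * (t ^ (p + 1) * g ^ (p + 1)))
          + (p * N * d * N + N) * (B * τ * q * g ^ 2 * h)) = d * (p + 2) * c₀ * N * (B / R) * (t ^ (p + 1) * g ^ (p + 1)) + K * (B * τ * q * g ^ 2 * h) := by
    rw [hK]; ring
  rw [this] at hsum
  linarith

/-- The vector field used in the integration by parts. -/
def FF {d N : ℕ} (p : ℝ) (θ : EuclideanSpace ℝ (Fin d) → ℝ)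
    (u : EuclideanSpace ℝ (Fin d) → EuclideanSpace ℝ (Fin N)) (m : EuclideanSpace ℝ (Fin N))
    (i : Fin d) (y : EuclideanSpace ℝ (Fin d)) : ℝ :=
  θ y ^ (p + 2) * ((∑ α : Fin N, ∑ j : Fin d, (fderiv ℝ u y (EuclideanSpace.single j 1) α) ^ 2)
      ^ (p / 2) * ∑ α : Fin N, (u y α - m α) * fderiv ℝ u y (EuclideanSpace.single i 1) α)

lemma FF_contDiffAt {d N : ℕ} (p : ℝ) (hp : 2 ≤ p) (θ : EuclideanSpace ℝ (Fin d) → ℝ)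
    (u : EuclideanSpace ℝ (Fin d) → EuclideanSpace ℝ (Fin N)) (m : EuclideanSpace ℝ (Fin N))
    (i : Fin d) (x : EuclideanSpace ℝ (Fin d)) (hθ : ContDiff ℝ 1 θ) (hu : ContDiffAt ℝ 2 u x) :
    ContDiffAt ℝ 1 (FF p θ u m i) x := by
  have hu1 : ContDiffAt ℝ 1 u x := hu.of_le (by norm_num)
  have hDu : ContDiffAt ℝ 1 (fderiv ℝ u) x := hu.fderiv_right (by norm_num)
  have hcomp : ∀ (j : Fin d) (α : Fin N), ContDiffAt ℝ 1 (fun y => fderiv ℝ u y (EuclideanSpace.single j 1) α) x := by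
    intro j α
    have : ContDiffAt ℝ 1 (fun y => fderiv ℝ u y (EuclideanSpace.single j 1)) x :=
      hDu.clm_apply contDiffAt_const
    exact (contDiffAt_euclidean.1 this) α
  have huc : ∀ α, ContDiffAt ℝ 1 (fun y => u y α) x := fun α => (contDiffAt_euclidean.1 hu1) α
  unfold FF
  refine ContDiffAt.mul ?_ (ContDiffAt.mul ?_ ?_)
  · exact hθ.contDiffAt.rpow_const_of_le (m := 1) (by push_cast; linarith)
  · refine ContDiffAt.rpow_const_of_le (m := 1) ?_ (by push_cast; linarith)
    exact ContDiffAt.sum fun α _ => ContDiffAt.sum fun j _ => (hcomp j α).pow 2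
  · exact ContDiffAt.sum fun α _ => ((huc α).sub contDiffAt_const).mul (hcomp i α)

lemma FF_fderiv {d N : ℕ} (p : ℝ) (hp : 2 ≤ p) (θ : EuclideanSpace ℝ (Fin d) → ℝ)
    (u : EuclideanSpace ℝ (Fin d) → EuclideanSpace ℝ (Fin N)) (m : EuclideanSpace ℝ (Fin N))
    (i : Fin d) (x : EuclideanSpace ℝ (Fin d)) (hθ : ContDiff ℝ 1 θ) (hu : ContDiffAt ℝ 2 u x)
    (a : Fin N → Fin d → ℝ) (ha : a = fun α j => fderiv ℝ u x (EuclideanSpace.single j 1) α)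
    (H : Fin N → Fin d → Fin d → ℝ)
    (hH : H = fun α i j => iteratedFDeriv ℝ 2 u x
      ![EuclideanSpace.single i 1, EuclideanSpace.single j 1] α) :
    fderiv ℝ (FF p θ u m i) x (EuclideanSpace.single i 1) =
      (θ x ^ (p + 2) * (gradFrob u x ^ p * (∑ α, (a α i * a α i + (u x α - m α) * H α i i))
          + (p / 2 * gradFrob u x ^ (p - 2) * ∑ α, ∑ j, 2 * (a α j * H α i j)) * ∑ α, (u x α - m α) * a α i)
          + ((p + 2) * θ x ^ (p + 1) * fderiv ℝ θ x (EuclideanSpace.single i 1)) *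
            (gradFrob u x ^ p * ∑ α, (u x α - m α) * a α i)) := by
  have h1 := ((FF_contDiffAt p hp θ u m i x hθ hu).differentiableAt (by norm_num)).hasFDerivAt.hasLineDerivAt
    (EuclideanSpace.single i 1)
  have hDu : ContDiffAt ℝ 1 (fderiv ℝ u) x := hu.fderiv_right (by norm_num)
  set e : EuclideanSpace ℝ (Fin d) := EuclideanSpace.single i 1 with he
  have hT : HasDerivAt (fun t : ℝ => θ (x + t • e)) (fderiv ℝ θ x e) 0 :=
    (hθ.differentiable (by norm_num) x).hasFDerivAt.hasLineDerivAt e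
  have hU : HasDerivAt (fun t : ℝ => u (x + t • e)) (fderiv ℝ u x e) 0 :=
    (hu.differentiableAt (by norm_num)).hasFDerivAt.hasLineDerivAt e
  have hUc : ∀ α, HasDerivAt (fun t : ℝ => u (x + t • e) α) (a α i) 0 := by
    intro α
    have := (EuclideanSpace.proj α : EuclideanSpace ℝ (Fin N) →L[ℝ] ℝ).hasFDerivAt.comp_hasDerivAt (0:ℝ) hU
    rw [ha]; exact this
  have hD : HasDerivAt (fun t : ℝ => fderiv ℝ u (x + t • e)) (fderiv ℝ (fderiv ℝ u) x e) 0 :=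
    (hDu.differentiableAt (by norm_num)).hasFDerivAt.hasLineDerivAt e
  have hDc : ∀ α j, HasDerivAt (fun t : ℝ => fderiv ℝ u (x + t • e) (EuclideanSpace.single j 1) α) (H α i j) 0 := by
    intro α j
    have h2 := hD.clm_apply (hasDerivAt_const (0:ℝ) (EuclideanSpace.single j 1 : EuclideanSpace ℝ (Fin d)))
    have := (EuclideanSpace.proj α : EuclideanSpace ℝ (Fin N) →L[ℝ] ℝ).hasFDerivAt.comp_hasDerivAt (0:ℝ) h2
    have h3 : H α i j = (EuclideanSpace.proj α : EuclideanSpace ℝ (Fin N) →L[ℝ] ℝ)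
      (fderiv ℝ (fderiv ℝ u) x e (EuclideanSpace.single j 1) + fderiv ℝ u (x + (0:ℝ) • e) 0) := by
      rw [hH]; simp [iteratedFDeriv_two_apply, he]
    rw [h3]; exact this
  have hx0 : x + (0:ℝ) • e = x := by simp
  have hGder : HasDerivAt (fun t : ℝ => ∑ α : Fin N, ∑ j : Fin d, (fderiv ℝ u (x + t • e) (EuclideanSpace.single j 1) α) ^ 2)
      (∑ α, ∑ j, 2 * (a α j * H α i j)) 0 := by
    refine HasDerivAt.fun_sum fun α _ => HasDerivAt.fun_sum fun j _ => ?_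
    have := (hDc α j).fun_pow 2
    rw [hx0] at this
    refine this.congr_deriv ?_
    rw [ha]; simp; ring
  have hSder : HasDerivAt (fun t : ℝ => ∑ α : Fin N, (u (x + t • e) α - m α) * fderiv ℝ u (x + t • e) e α)
      (∑ α, (a α i * a α i + (u x α - m α) * H α i i)) 0 := by
    refine HasDerivAt.fun_sum fun α _ => ?_
    have := ((hUc α).sub_const (m α)).fun_mul (hDc α i)
    rw [hx0] at this
    refine this.congr_deriv ?_
    rw [ha]
  have hG0 : ∀ q : ℝ, (∑ α : Fin N, ∑ j : Fin d, (fderiv ℝ u x (EuclideanSpace.single j 1) α) ^ 2) ^ (q / 2) = gradFrob u x ^ q := by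
    intro q
    unfold gradFrob
    rw [Real.sqrt_eq_rpow, ← Real.rpow_mul (by positivity)]
    congr 1; ring
  have hGp := hGder.rpow_const (p := p / 2) (Or.inr (by linarith))
  have hTp := hT.rpow_const (p := p + 2) (Or.inr (by linarith))
  have h2 := hTp.fun_mul (hGp.fun_mul hSder)
  have h3 := HasDerivAt.unique h1 h2
  rw [h3, hx0, hG0, show p / 2 - 1 = (p - 2) / 2 by ring, hG0, show p + 2 - 1 = p + 1 by ring]
  have : ∑ α : Fin N, (u x α - m α) * fderiv ℝ u x e α = ∑ α, (u x α - m α) * a α i := by rw [ha]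
  rw [this]
  ring

lemma integral_fderiv_zero {d : ℕ} (f : EuclideanSpace ℝ (Fin d) → ℝ) (hf : ContDiff ℝ 1 f)
    (hc : HasCompactSupport f) (e : EuclideanSpace ℝ (Fin d)) :
    Integrable (fun x => fderiv ℝ f x e) ∧ ∫ x, fderiv ℝ f x e = 0 := by
  have hI : Integrable (fun x => fderiv ℝ f x e) := by
    refine Continuous.integrable_of_hasCompactSupport ?_ (hc.fderiv_apply (𝕜 := ℝ) e)
    exact (hf.continuous_fderiv (by norm_num)).clm_apply continuous_const
  refine ⟨hI, ?_⟩
  have := integral_mul_fderiv_eq_neg_fderiv_mul_of_integrable (μ := volume) (𝕜 := ℝ) (f := fun _ : EuclideanSpace ℝ (Fin d) => (1:ℝ))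
    (g := f) (v := e) (by simp) (by simpa using hI) (by simpa using hf.continuous.integrable_of_hasCompactSupport hc)
    (fun x _ => by fun_prop) (fun x _ => hf.differentiable (by norm_num) x)
  simpa using this

lemma cube_facts {d : ℕ} (c : EuclideanSpace ℝ (Fin d)) (R : ℝ) (hR : 0 < R) :
    IsOpen (cube c R) ∧ c ∈ cube c R ∧ Bornology.IsBounded (cube c R) := by
  refine ⟨?_, ?_, ?_⟩
  · have : cube c R = ⋂ i, {x | |x i - c i| < R / 2} := by ext; simp [cube]
    rw [this]
    refine isOpen_iInter_of_finite fun i => isOpen_lt ?_ continuous_const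
    fun_prop
  · intro i; simp; exact hR
  · refine (Metric.isBounded_closedBall (x := c) (r := Real.sqrt (∑ i : Fin d, (R / 2) ^ 2))).subset ?_
    intro x hx
    rw [Metric.mem_closedBall, EuclideanSpace.dist_eq]
    refine Real.sqrt_le_sqrt (Finset.sum_le_sum fun i _ => ?_)
    rw [Real.dist_eq]
    exact pow_le_pow_left₀ (abs_nonneg _) (hx i).le 2

theorem stmt16 (d N : ℕ) (p c₀ : ℝ) (hp : 2 ≤ p) (hc₀ : 0 < c₀) :
    ∃ c : ℝ, 0 < c ∧
      ∀ (cQ : EuclideanSpace ℝ (Fin d)) (R : ℝ), 0 < R →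
      ∀ θ : EuclideanSpace ℝ (Fin d) → ℝ,
        ContDiff ℝ 1 θ → tsupport θ ⊆ cube cQ (2 * R) →
        (∀ x, 0 ≤ θ x) → (∀ x, θ x ≤ 1) → (∀ x ∈ cube cQ R, θ x = 1) →
        (∀ x, ‖fderiv ℝ θ x‖ ≤ c₀ / R) →
      ∀ u : EuclideanSpace ℝ (Fin d) → EuclideanSpace ℝ (Fin N),
        (∃ U, IsOpen U ∧ closure (cube cQ (2 * R)) ⊆ U ∧ ContDiffOn ℝ 2 u U) →
      ∀ B : ℝ,
        (∀ x ∈ cube cQ (2 * R), ‖u x - ⨍ y in cube cQ (2 * R), u y‖ ≤ B) →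
        ⨍ x in cube cQ (2 * R), θ x ^ (p + 2) * gradFrob u x ^ (p + 2) ≤
          c * ((B / R) ^ (p + 2) +
            B ^ 2 * ⨍ x in cube cQ (2 * R),
              θ x ^ (p + 2) * gradFrob u x ^ (p - 2) * hessFrob u x ^ 2) := by
  set C1 : ℝ := 2 * (4 * (d * (p + 2) * c₀ * N)) ^ (p + 2) with hC1
  set C2 : ℝ := 2 * (d * (p * N * d * N + N)) ^ 2 with hC2
  have hC1p : 0 ≤ C1 := by positivity
  have hC2p : 0 ≤ C2 := by positivity
  refine ⟨C1 + C2 + 1, by positivity, ?_⟩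
  intro cQ R hR θ hθ hsupp hθ0 _ _ hdθ u ⟨U, hUo, hUs, hu⟩ B hB
  set m := ⨍ y in cube cQ (2 * R), u y with hm
  obtain ⟨hQo, hQc, hQb⟩ := cube_facts cQ (2 * R) (by positivity)
  set Q := cube cQ (2 * R) with hQ
  have hB0 : 0 ≤ B := (norm_nonneg _).trans (hB cQ hQc)
  have hQU : Q ⊆ U := subset_closure.trans hUs
  have huA : ∀ x ∈ U, ContDiffAt ℝ 2 u x := fun x hx => hu.contDiffAt (hUo.mem_nhds hx)
  have hK : IsCompact (closure Q) := hQb.isCompact_closure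
  have hcs : HasCompactSupport θ := hK.of_isClosed_subset (isClosed_tsupport θ) (hsupp.trans subset_closure)
  have hFsupp : ∀ i, Function.support (FF p θ u m i) ⊆ Function.support θ := by
    intro i x hx h0
    apply hx
    have : θ x = 0 := h0
    simp only [FF, this]
    rw [Real.zero_rpow (by linarith), zero_mul]
  have hFts : ∀ i, tsupport (FF p θ u m i) ⊆ tsupport θ := fun i => closure_mono (hFsupp i)
  have hFc : ∀ i, HasCompactSupport (FF p θ u m i) := fun i => hcs.mono (hFsupp i)
  have hFd : ∀ i, ContDiff ℝ 1 (FF p θ u m i) := by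
    intro i
    rw [contDiff_iff_contDiffAt]
    intro x
    by_cases hx : x ∈ tsupport θ
    · exact FF_contDiffAt p hp θ u m i x hθ (huA x (hQU (hsupp hx)))
    · have h0 : FF p θ u m i =ᶠ[nhds x] fun _ => 0 :=
        notMem_tsupport_iff_eventuallyEq.1 (fun h => hx (hFts i h))
      exact contDiffAt_const.congr_of_eventuallyEq h0
  have hFi : ∀ i, IntegrableOn (fun x => fderiv ℝ (FF p θ u m i) x (EuclideanSpace.single i 1)) Q :=
    fun i => (integral_fderiv_zero _ (hFd i) (hFc i) _).1.integrableOn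
  have hFz : ∀ i, ∫ x in Q, fderiv ℝ (FF p θ u m i) x (EuclideanSpace.single i 1) = 0 := by
    intro i
    rw [setIntegral_eq_integral_of_forall_compl_eq_zero]
    · exact (integral_fderiv_zero _ (hFd i) (hFc i) _).2
    · intro x hx
      have : x ∉ tsupport (FF p θ u m i) := fun h => hx (hsupp (hFts i h))
      rw [fderiv_of_notMem_tsupport ℝ this]; rfl
  have hgc : ContinuousOn (gradFrob u) U := by
    intro x hx
    refine ContinuousAt.continuousWithinAt ?_
    have hDu : ContinuousAt (fderiv ℝ u) x := ((huA x hx).fderiv_right (m := 1) (by norm_num)).continuousAt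
    unfold gradFrob
    fun_prop
  have hhc : ContinuousOn (hessFrob u) U := by
    intro x hx
    refine ContinuousAt.continuousWithinAt ?_
    have hDu : ContDiffAt ℝ 1 (fderiv ℝ u) x := (huA x hx).fderiv_right (m := 1) (by norm_num)
    have hDDu : ContinuousAt (fderiv ℝ (fderiv ℝ u)) x := (hDu.fderiv_right (m := 0) (by norm_num)).continuousAt
    unfold hessFrob
    simp only [iteratedFDeriv_two_apply]
    fun_prop
  have hθc := hθ.continuous
  have hI1 : IntegrableOn (fun x => θ x ^ (p + 2) * gradFrob u x ^ (p + 2)) Q := by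
    refine (ContinuousOn.integrableOn_compact hK ?_).mono_set subset_closure
    refine ContinuousOn.mul ?_ ((hgc.mono hUs).rpow_const fun x _ => Or.inr (by linarith))
    exact hθc.continuousOn.rpow_const fun x _ => Or.inr (by linarith)
  have hI2 : IntegrableOn (fun x => θ x ^ (p + 2) * gradFrob u x ^ (p - 2) * hessFrob u x ^ 2) Q := by
    refine (ContinuousOn.integrableOn_compact hK ?_).mono_set subset_closure
    refine ContinuousOn.mul (ContinuousOn.mul ?_ ((hgc.mono hUs).rpow_const fun x _ => Or.inr (by linarith))) ((hhc.mono hUs).pow 2)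
    exact hθc.continuousOn.rpow_const fun x _ => Or.inr (by linarith)
  have hpt : ∀ x ∈ Q, θ x ^ (p + 2) * gradFrob u x ^ (p + 2) ≤
      2 * (∑ i, fderiv ℝ (FF p θ u m i) x (EuclideanSpace.single i 1)) + (C1 * (B / R) ^ (p + 2) +
        C2 * (B ^ 2 * (θ x ^ (p + 2) * gradFrob u x ^ (p - 2) * hessFrob u x ^ 2))) := by
    intro x hx
    have := pointwise p c₀ R B (θ x) (gradFrob u x) (hessFrob u x) hp hc₀ hR hB0 (hθ0 x)
      (Real.sqrt_nonneg _) (Real.sqrt_nonneg _)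
      (fun i => fderiv ℝ θ x (EuclideanSpace.single i 1)) ?_ (fun α => u x α - m α) ?_
      (fun α j => fderiv ℝ u x (EuclideanSpace.single j 1) α)
      (fun α i j => iteratedFDeriv ℝ 2 u x
        ![EuclideanSpace.single i 1, EuclideanSpace.single j 1] α) ?_ ?_ ?_
    · refine this.trans_eq ?_
      congr 2
      refine Finset.sum_congr rfl fun i _ => ?_
      rw [FF_fderiv p hp θ u m i x hθ (huA x (hQU hx)) _ rfl _ rfl]
    · intro i
      have h := (fderiv ℝ θ x).le_opNorm (EuclideanSpace.single i 1)
      rw [EuclideanSpace.norm_single, norm_one, mul_one] at h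
      exact h.trans (hdθ x)
    · intro α
      have h := PiLp.norm_apply_le (u x - m) α
      exact h.trans (hB x hx)
    · exact Real.sq_sqrt (by positivity)
    · intro α i
      refine Real.abs_le_sqrt ?_
      refine le_trans ?_ (Finset.single_le_sum (fun β _ => by positivity) (Finset.mem_univ α))
      exact Finset.single_le_sum (f := fun j => (fderiv ℝ u x (EuclideanSpace.single j 1) α) ^ 2) (fun β _ => by positivity) (Finset.mem_univ i)
    · intro α i j
      refine Real.abs_le_sqrt ?_
      refine le_trans ?_ (Finset.single_le_sum (fun β _ => by positivity) (Finset.mem_univ α))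
      refine le_trans ?_ (Finset.single_le_sum (fun β _ => by positivity) (Finset.mem_univ i))
      exact Finset.single_le_sum (f := fun j => (iteratedFDeriv ℝ 2 u x
        ![EuclideanSpace.single i 1, EuclideanSpace.single j 1] α) ^ 2) (fun β _ => by positivity) (Finset.mem_univ j)
  have hfin : volume Q < ⊤ := hQb.measure_lt_top
  have hpos : 0 < volume.real Q := by
    refine ENNReal.toReal_pos (hQo.measure_pos volume ⟨cQ, hQc⟩).ne' hfin.ne
  have hIs : IntegrableOn (fun x => 2 * (∑ i, fderiv ℝ (FF p θ u m i) x (EuclideanSpace.single i 1))) Q :=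
    (integrable_finsetSum _ fun i _ => hFi i).const_mul 2
  have hIc : IntegrableOn (fun _ : EuclideanSpace ℝ (Fin d) => C1 * (B / R) ^ (p + 2)) Q :=
    integrableOn_const hfin.ne
  have hI3 := (Integrable.const_mul hI2 (B ^ 2)).const_mul C2
  have hmono := setIntegral_mono_on hI1 (hIs.add (hIc.add hI3)) hQo.measurableSet hpt
  have hE1 := integral_add hIs (hIc.add hI3)
  have hE2 := integral_add hIc hI3
  simp only [Pi.add_apply] at hE1 hE2 hmono
  rw [hE1, hE2, integral_const_mul, integral_finsetSum _ (fun i _ => hFi i), Finset.sum_congr rfl (fun i _ => hFz i),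
    integral_const_mul, integral_const_mul, integral_const_mul, setIntegral_const] at hmono
  simp only [Finset.sum_const_zero, mul_zero, zero_add, smul_eq_mul] at hmono
  rw [setAverage_eq, setAverage_eq, smul_eq_mul, smul_eq_mul]
  set J := ∫ x in Q, θ x ^ (p + 2) * gradFrob u x ^ (p - 2) * hessFrob u x ^ 2 with hJ
  have hJ0 : 0 ≤ J := by
    refine setIntegral_nonneg hQo.measurableSet fun x _ => ?_
    have := hθ0 x
    have : 0 ≤ gradFrob u x := Real.sqrt_nonneg _
    positivity
  set V := volume.real Q with hV
  have h1 := mul_le_mul_of_nonneg_left hmono (inv_nonneg.2 hpos.le)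
  refine h1.trans ?_
  have hBR : 0 ≤ (B / R) ^ (p + 2) := by positivity
  have hJ1 : 0 ≤ B ^ 2 * (V⁻¹ * J) := by positivity
  have : V⁻¹ * (C1 * (V * (B / R) ^ (p + 2)) + C2 * (B ^ 2 * J)) = C1 * (B / R) ^ (p + 2) + C2 * (B ^ 2 * (V⁻¹ * J)) := by
    field_simp
  rw [this]
  nlinarith [mul_nonneg hC1p hBR, mul_nonneg hC2p hBR, mul_nonneg hC1p hJ1, mul_nonneg hC2p hJ1]
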